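/- Suppose p = 3. Then every DAV form has pairwise distinct rows if and only if β ≥ 2α or β = 2α − 2. That is, the following are equivalent: (i) β ≥ 2α or β = 2α − 2; (ii) every function g : X × Y → A with g(x,y) ∈ AM(x+y) for all (x,y) ∈ X × Y satisfies: for all distinct x, x' ∈ X there exists y ∈ Y with g(x,y) ≠ g(x',y). -/

import Mathlib

/-- The set of candidates receiving the maximum number of cards under `z`. -/
def AM {A : Type*} [Fintype A] (z : A → ℕ) : Set A := {a | ∀ b, z b ≤ z a}

/-!
A DAV form with two equal rows `x ≠ x'` exists exactly when `x + y` and `x' + y` have a common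
winner for every `y`. The hardest rows to separate differ by a single card, `x = w + e_b` and
`x' = w + e_a`; then `x + y` and `x' + y` have no common winner precisely when `a` and `b` are tied
for the first place in `w + y`. Conversely, such ties suffice to separate arbitrary rows: choose `a`
with `x a < x' a` and `b` with `x' b < x b`, and write `x' = w + e_a`.

So with `α = n + 1` one asks whether, from every position `w` with `n` cards, `β` further cards can
tie any two candidates for the first place. For three candidates the worst case is that all `n`
cards lie on the third candidate; the final position is then `(m, m, s)` with `n ≤ s ≤ m` and
`2 m + s = n + β`, which is solvable unless `β < 2 n` or `β = 2 n + 1`.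
-/

open Finset

theorem exists_lt_of_sum_eq_of_ne {ι M : Type*} [Fintype ι] [AddCommMonoid M] [LinearOrder M]
    [IsOrderedCancelAddMonoid M] {f g : ι → M} (hsum : ∑ i, f i = ∑ i, g i) (hne : f ≠ g) :
    ∃ i, f i < g i := by
  by_contra! hle
  exact hsum.not_gt (Fintype.sum_strictMono (lt_of_le_of_ne hle hne.symm))

theorem sum_add_single {ι M : Type*} [Fintype ι] [DecidableEq ι] [AddCommMonoid M]
    (f : ι → M) (i : ι) (m : M) : ∑ j, (f + Pi.single i m : ι → M) j = ∑ j, f j + m := by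
  simp [sum_add_distrib]

theorem exists_univ_eq_triple {A : Type*} [Fintype A] [DecidableEq A] {a b : A}
    (hcard : Fintype.card A = 3) (hab : a ≠ b) :
    ∃ c, a ≠ c ∧ b ≠ c ∧ (univ : Finset A) = {a, b, c} := by
  obtain ⟨c, -, hc⟩ : ∃ c ∈ univ, c ∉ ({a, b} : Finset A) :=
    exists_mem_notMem_of_card_lt_card (by rw [card_pair hab, card_univ, hcard]; decide)
  simp only [mem_insert, mem_singleton, not_or] at hc
  have hac : a ≠ c := Ne.symm hc.1
  have hbc : b ≠ c := Ne.symm hc.2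
  refine ⟨c, hac, hbc, (eq_univ_of_card _ ?_).symm⟩
  rw [hcard, card_eq_three]
  exact ⟨a, b, c, hab, hac, hbc, rfl⟩

section DAVForm

variable {A : Type*} [Fintype A] {α β n : ℕ} {x x' y z w : A → ℕ} {a b c : A}

/-- `g` is a distributed approval voting form for voters with `α` and `β` cards. It is encoded as a
total function; only its values at strategies with the right number of cards are constrained. -/
def IsDAVForm (α β : ℕ) (g : (A → ℕ) → (A → ℕ) → A) : Prop :=
  ∀ x y : A → ℕ, ∑ a, x a = α → ∑ a, y a = β → g x y ∈ AM (x + y)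

/-- The rows of `g`, indexed by the strategies with `α` cards, are pairwise distinct as functions
of the strategies with `β` cards. -/
def HasDistinctRows (α β : ℕ) (g : (A → ℕ) → (A → ℕ) → A) : Prop :=
  ∀ x x' : A → ℕ, ∑ a, x a = α → ∑ a, x' a = α → x ≠ x' →
    ∃ y : A → ℕ, ∑ a, y a = β ∧ g x y ≠ g x' y

/-- Starting from the position `w`, exactly `β` further cards can make both `a` and `b` winners.
Possibility of such ties governs whether rows can be separated. -/
def CanTie (β : ℕ) (w : A → ℕ) (a b : A) : Prop :=
  ∃ y : A → ℕ, ∑ i, y i = β ∧ a ∈ AM (w + y) ∧ b ∈ AM (w + y)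

theorem AM_nonempty [Nonempty A] (z : A → ℕ) : (AM z).Nonempty :=
  Finite.exists_max z

theorem exists_isDAVForm_row_eq [Nonempty A]
    (h : ∀ y : A → ℕ, ∑ i, y i = β → (AM (x + y) ∩ AM (x' + y)).Nonempty) :
    ∃ g : (A → ℕ) → (A → ℕ) → A, IsDAVForm α β g ∧ g x = g x' := by
  classical
  choose! common hcommon using h
  choose winner hwinner using AM_nonempty (A := A)
  refine ⟨fun p y ↦ if p = x ∨ p = x' then common y else winner (p + y), ?_, by simp⟩
  intro p y _ hy
  dsimp only
  split_ifs with hp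
  · obtain rfl | rfl := hp
    exacts [(hcommon y hy).1, (hcommon y hy).2]
  · exact hwinner (p + y)

theorem forall_hasDistinctRows_iff_exists_disjoint_AM :
    (∀ g : (A → ℕ) → (A → ℕ) → A, IsDAVForm α β g → HasDistinctRows α β g) ↔
      ∀ x x' : A → ℕ, ∑ i, x i = α → ∑ i, x' i = α → x ≠ x' →
        ∃ y : A → ℕ, ∑ i, y i = β ∧ Disjoint (AM (x + y)) (AM (x' + y)) := by
  constructor
  · intro hrows x x' hx hx' hne
    by_contra! hcommon
    obtain ⟨a, -⟩ := Function.ne_iff.1 hne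
    have : Nonempty A := ⟨a⟩
    obtain ⟨g, hg, hgx⟩ := exists_isDAVForm_row_eq (α := α) fun y hy ↦
      Set.not_disjoint_iff_nonempty_inter.1 (hcommon y hy)
    obtain ⟨y, -, hy⟩ := hrows g hg x x' hx hx' hne
    exact hy (congrFun hgx y)
  · intro hsep g hg x x' hx hx' hne
    obtain ⟨y, hy, hdisj⟩ := hsep x x' hx hx' hne
    exact ⟨y, hy, hdisj.ne_of_mem (hg x y hx hy) (hg x' y hx' hy)⟩

section AddCard

variable [DecidableEq A]

theorem mem_AM_add_single_one (ha : a ∈ AM z) (h : a = b ∨ b ∉ AM z) :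
    a ∈ AM (z + Pi.single b 1) := by
  intro c
  have hca : z c ≤ z a := ha c
  obtain rfl | hcb := eq_or_ne c b
  · obtain rfl | hc := h
    · exact le_rfl
    · obtain ⟨d, hd⟩ : ∃ d, z c < z d := by simpa [AM] using hc
      have hda : z d ≤ z a := ha d
      simp only [Pi.add_apply, Pi.single_eq_same]
      omega
  · simp only [Pi.add_apply, Pi.single_eq_of_ne hcb]
    omega

theorem mem_AM_of_disjoint_AM_add_single_one
    (h : Disjoint (AM (z + Pi.single a 1)) (AM (z + Pi.single b 1))) :
    a ∈ AM z ∧ b ∈ AM z := by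
  have no_common (c : A) (hc : c ∈ AM z) : ¬((c = a ∨ a ∉ AM z) ∧ (c = b ∨ b ∉ AM z)) :=
    fun ⟨hca, hcb⟩ ↦ Set.disjoint_left.1 h (mem_AM_add_single_one hc hca)
      (mem_AM_add_single_one hc hcb)
  have : Nonempty A := ⟨a⟩
  obtain ⟨c, hc⟩ := AM_nonempty z
  by_cases ha : a ∈ AM z <;> by_cases hb : b ∈ AM z
  · exact ⟨ha, hb⟩
  · exact (no_common a ha ⟨.inl rfl, .inr hb⟩).elim
  · exact (no_common b hb ⟨.inr ha, .inl rfl⟩).elim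
  · exact (no_common c hc ⟨.inr ha, .inr hb⟩).elim

theorem disjoint_AM_of_tie (ha : a ∈ AM (w + y)) (hb : b ∈ AM (w + y))
    (hxa : x a ≤ w a) (hxb : w b < x b) :
    Disjoint (AM (x + y)) (AM (w + Pi.single a 1 + y)) := by
  refine Set.disjoint_left.2 fun c hc hc' ↦ ?_
  have hac := hc' a
  have hca := ha c
  obtain rfl | hne := eq_or_ne c a
  · have hbc := hc b
    have hcb := hb c
    simp only [Pi.add_apply] at hbc hcb
    omega
  · simp only [Pi.add_apply, Pi.single_eq_same, Pi.single_eq_of_ne hne] at hac hca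
    omega

theorem canTie_of_disjoint_AM (hy : ∑ i, y i = β)
    (h : Disjoint (AM (w + Pi.single a 1 + y)) (AM (w + Pi.single b 1 + y))) :
    CanTie β w a b := by
  rw [add_right_comm w, add_right_comm w (Pi.single b 1)] at h
  exact ⟨y, hy, mem_AM_of_disjoint_AM_add_single_one h⟩

end AddCard

theorem forall_hasDistinctRows_succ_iff_forall_canTie :
    (∀ g : (A → ℕ) → (A → ℕ) → A, IsDAVForm (n + 1) β g → HasDistinctRows (n + 1) β g) ↔
      ∀ w : A → ℕ, ∑ i, w i = n → ∀ a b, a ≠ b → CanTie β w a b := by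
  classical
  rw [forall_hasDistinctRows_iff_exists_disjoint_AM]
  constructor
  · rintro hsep w rfl a b hab
    have hne : w + Pi.single a 1 ≠ w + Pi.single b 1 := fun heq ↦ by
      simpa [hab] using congrFun heq a
    obtain ⟨y, hy, hdisj⟩ :=
      hsep _ _ (sum_add_single w a 1) (sum_add_single w b 1) hne
    exact canTie_of_disjoint_AM hy hdisj
  · intro htie x x' hx hx' hne
    obtain ⟨a, ha⟩ := exists_lt_of_sum_eq_of_ne (hx.trans hx'.symm) hne
    obtain ⟨b, hb⟩ := exists_lt_of_sum_eq_of_ne (hx'.trans hx.symm) hne.symm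
    have hab : b ≠ a := by
      rintro rfl
      exact ha.not_gt hb
    obtain ⟨w, rfl⟩ : ∃ w, x' = w + Pi.single a 1 :=
      le_iff_exists_add'.1 (update_le_iff.2 ⟨Nat.one_le_of_lt ha, fun _ _ ↦ Nat.zero_le _⟩)
    rw [sum_add_single, Nat.add_right_cancel_iff] at hx'
    simp only [Pi.add_apply, Pi.single_eq_same, Nat.lt_succ_iff] at ha
    simp only [Pi.add_apply, Pi.single_eq_of_ne hab, add_zero] at hb
    obtain ⟨y, hy, hay, hby⟩ := htie w hx' a b hab.symm
    exact ⟨y, hy, disjoint_AM_of_tie hay hby ha hb⟩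

theorem canTie_iff_exists_le :
    CanTie β w a b ↔
      ∃ z : A → ℕ, w ≤ z ∧ ∑ i, z i = ∑ i, w i + β ∧ a ∈ AM z ∧ b ∈ AM z := by
  constructor
  · rintro ⟨y, rfl, ha, hb⟩
    exact ⟨w + y, le_self_add, sum_add_distrib, ha, hb⟩
  · rintro ⟨z, hwz, hsum, ha, hb⟩
    obtain ⟨y, rfl⟩ := exists_add_of_le hwz
    simp only [Pi.add_apply, sum_add_distrib, Nat.add_left_cancel_iff] at hsum
    exact ⟨y, hsum, ha, hb⟩

theorem canTie_iff_exists_levels [DecidableEq A] (hab : a ≠ b) (hac : a ≠ c) (hbc : b ≠ c)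
    (huniv : (univ : Finset A) = {a, b, c}) :
    CanTie β w a b ↔
      ∃ m s, w a ≤ m ∧ w b ≤ m ∧ w c ≤ s ∧ s ≤ m ∧ 2 * m + s = ∑ i, w i + β := by
  have hforall (p : A → Prop) : (∀ i, p i) ↔ p a ∧ p b ∧ p c := by
    have h : (∀ i ∈ univ, p i) ↔ ∀ i ∈ ({a, b, c} : Finset A), p i := by rw [huniv]
    simpa using h
  have hsum (f : A → ℕ) : ∑ i, f i = f a + f b + f c := by
    rw [huniv, sum_insert (by simp [hab, hac]), sum_pair hbc, add_assoc]
  simp only [canTie_iff_exists_le, AM, Set.mem_ofPred_eq, Pi.le_def, hforall, hsum]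
  constructor
  · rintro ⟨z, ⟨ha, hb, hc⟩, hz, ⟨-, hba, hca⟩, ⟨hab', -, -⟩⟩
    exact ⟨z a, z c, ha, by omega, hc, hca, by omega⟩
  · rintro ⟨m, s, ha, hb, hc, hsm, hms⟩
    refine ⟨Function.update (fun _ ↦ m) c s, ?_⟩
    simp only [Function.update_self, Function.update_of_ne hac, Function.update_of_ne hbc]
    omega

theorem forall_canTie_iff_of_card_eq_three (hcard : Fintype.card A = 3) :
    (∀ w : A → ℕ, ∑ i, w i = n → ∀ a b, a ≠ b → CanTie β w a b) ↔
      2 * n ≤ β ∧ β ≠ 2 * n + 1 := by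
  classical
  constructor
  · intro htie
    obtain ⟨a, b, hab⟩ := Fintype.exists_pair_of_one_lt_card (α := A) (by omega)
    obtain ⟨c, hac, hbc, huniv⟩ := exists_univ_eq_triple hcard hab
    have hsum : ∑ i, (Pi.single c n : A → ℕ) i = n := by simp
    obtain ⟨m, s, -, -, hns, hsm, hms⟩ :=
      (canTie_iff_exists_levels hab hac hbc huniv).1 (htie (Pi.single c n) hsum a b hab)
    rw [Pi.single_eq_same] at hns
    omega
  · rintro ⟨hle, hne⟩ w rfl a b hab
    obtain ⟨c, hac, hbc, huniv⟩ := exists_univ_eq_triple hcard hab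
    have hw (i : A) : w i ≤ ∑ j, w j := single_le_sum_of_canonicallyOrdered (mem_univ i)
    have hwa := hw a
    have hwb := hw b
    have hwc := hw c
    exact (canTie_iff_exists_levels hab hac hbc huniv).2
      ⟨β / 2, ∑ i, w i + β % 2, by omega, by omega, by omega, by omega, by omega⟩

end DAVForm

/-- For `p = 3`: every DAV form has pairwise distinct rows iff `β ≥ 2α` or
`β = 2α - 2`. -/
theorem dav_form_distinct_rows_iff_three_candidates
    {A : Type*} [Fintype A] (α β : ℕ) (hα : 1 ≤ α) (hβ : 1 ≤ β)
    (hp : Fintype.card A = 3) :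
    (2 * α ≤ β ∨ β = 2 * α - 2) ↔
      ∀ g : (A → ℕ) → (A → ℕ) → A,
        (∀ x y : A → ℕ, (∑ a, x a) = α → (∑ a, y a) = β → g x y ∈ AM (x + y)) →
        ∀ x x' : A → ℕ, (∑ a, x a) = α → (∑ a, x' a) = α → x ≠ x' →
          ∃ y : A → ℕ, (∑ a, y a) = β ∧ g x y ≠ g x' y := by
  obtain ⟨n, rfl⟩ := Nat.exists_eq_add_of_le' hα
  change _ ↔ ∀ g : (A → ℕ) → (A → ℕ) → A,
    IsDAVForm (n + 1) β g → HasDistinctRows (n + 1) β g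
  rw [forall_hasDistinctRows_succ_iff_forall_canTie, forall_canTie_iff_of_card_eq_three hp]
  omega
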